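/- Let ℐ be an ideal of the ring 𝒪_{ℂⁿ,0} of germs of holomorphic functions at 0, and let g₁, …, g_k ∈ ℐ be such that the ideal IM(ℐ) generated by the initial monomials of all elements of ℐ equals the ideal generated by IM(g₁), …, IM(g_k). Then g₁, …, g_k generate ℐ. -/

import Mathlib

/-!
The proof is division with remainder by convergent power series, carried out in a weighted `ℓ¹`
space.

Only finitely many initial monomials `z^β`, `β ∈ B`, matter (Dickson's lemma,
`exists_finset_basis`), and a positive integral weight `W` sees each `z^β` as strictly lighter than
every later monomial (`exists_weight`). On the polydisc with radii `ρ i = ε ^ W i` and `ε` small,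
the leading term of each divisor `G β` therefore has at least twice the norm of the rest of the
series, for the norm `∑ |a α| ρ^α` (`eventually_dominates`).

In this normed space, isometric to `ℓ¹`, replace each normalised monomial `z^α / ρ^α` for which
some `z^β` divides `z^α` by the multiple `z^(α - β) * G β` with the same leading term. Every unit
vector moves by at most `1/2`, so the new family still spans by a Neumann series
(`l1_exists_hasSum`). Expanding `f` along it and grouping the terms by the divisor used gives
`f = ∑ q β * G β + r`, where no monomial of `r` is divisible by any `z^β` (`exists_division`).

If `f` lies in the ideal, so does `r`; were `r` nonzero, its initial monomial would be divisible by
some `z^β`, a contradiction. Hence `f = ∑ q β * G β`. Passing between germs and coefficients uses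
that analytic functions have Taylor coefficients and that absolutely convergent power series are
analytic.
-/

open MeasureTheory Filter Topology Complex
open scoped ENNReal

noncomputable section

/-- The homogeneous lexicographic order on monomials `z^α`. -/
def monLE {n : ℕ} (α β : Fin n → ℕ) : Prop :=
  α = β ∨ (∑ i, α i) < (∑ i, β i) ∨
    ((∑ i, α i) = (∑ i, β i) ∧ ∃ i, α i < β i ∧ ∀ j, j < i → α j = β j)

/-- `a` is the family of Taylor coefficients of `f` at `0`. -/
def HasTaylorCoeffsAt {n : ℕ} (f : (Fin n → ℂ) → ℂ) (a : (Fin n → ℕ) → ℂ) : Prop :=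
  ∃ U ∈ 𝓝 (0 : Fin n → ℂ), ∀ z ∈ U,
    Summable (fun α : Fin n → ℕ => a α * ∏ i, z i ^ α i) ∧
    f z = ∑' α : Fin n → ℕ, a α * ∏ i, z i ^ α i

/-- The ring of germs at `0` of complex-valued functions on `ℂⁿ`. -/
abbrev GermAt0 (n : ℕ) : Type := (𝓝 (0 : Fin n → ℂ)).Germ ℂ

/-- The ring `𝒪_{ℂⁿ,0}` of germs at `0` of holomorphic functions, as a subring of the ring of
germs at `0` of all complex-valued functions. -/
def HoloGerms (n : ℕ) : Subring (GermAt0 n) where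
  carrier := {F | ∃ f : (Fin n → ℂ) → ℂ, AnalyticAt ℂ f 0 ∧ F = (f : GermAt0 n)}
  zero_mem' := ⟨0, analyticAt_const, rfl⟩
  one_mem' := ⟨1, analyticAt_const, rfl⟩
  add_mem' := by
    rintro F G ⟨f, hf, rfl⟩ ⟨g, hg, rfl⟩
    exact ⟨f + g, hf.add hg, rfl⟩
  neg_mem' := by
    rintro F ⟨f, hf, rfl⟩
    exact ⟨-f, hf.neg, rfl⟩
  mul_mem' := by
    rintro F G ⟨f, hf, rfl⟩ ⟨g, hg, rfl⟩
    exact ⟨f * g, hf.mul hg, rfl⟩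

/-- `z^α` is the initial monomial `IM(F)` of the germ `F` at `0`. -/
def GermIsInitialMonomialOf {n : ℕ} (α : Fin n → ℕ) (F : GermAt0 n) : Prop :=
  ∃ (f : (Fin n → ℂ) → ℂ) (a : (Fin n → ℕ) → ℂ),
    F = (f : GermAt0 n) ∧ HasTaylorCoeffsAt f a ∧ a α ≠ 0 ∧ ∀ β, a β ≠ 0 → monLE α β

/-! ### Power series and analytic functions -/

/-- The monomial `z^α` as a continuous multilinear map of `|α|` variables, restricted to the
diagonal. -/
theorem exists_multilinear_monomial {n : ℕ} (α : Fin n → ℕ) (m : ℕ) :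
    ∃ M : ContinuousMultilinearMap ℂ (fun _ : Fin m => Fin n → ℂ) ℂ,
      ‖M‖ ≤ 1 ∧ (∑ i, α i = m → ∀ z : Fin n → ℂ, M (fun _ => z) = ∏ i, z i ^ α i) := by
  by_cases h : ∑ i, α i = m
  · subst h
    let c : Fin (∑ i, α i) → Fin n := fun j => (finSigmaFinEquiv.symm j).1
    refine ⟨(ContinuousMultilinearMap.mkPiAlgebra ℂ (Fin (∑ i, α i)) ℂ).compContinuousLinearMap
      (fun j => ContinuousLinearMap.proj (c j)), ?_, ?_⟩
    · refine ContinuousMultilinearMap.opNorm_le_bound zero_le_one fun v => ?_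
      simp only [ContinuousMultilinearMap.compContinuousLinearMap_apply,
        ContinuousMultilinearMap.mkPiAlgebra_apply, ContinuousLinearMap.proj_apply, norm_prod,
        one_mul]
      exact Finset.prod_le_prod (fun _ _ => norm_nonneg _) fun j _ => norm_le_pi_norm (v j) (c j)
    · intro _ z
      simp only [ContinuousMultilinearMap.compContinuousLinearMap_apply,
        ContinuousMultilinearMap.mkPiAlgebra_apply, ContinuousLinearMap.proj_apply, c]
      rw [Equiv.prod_comp finSigmaFinEquiv.symm (fun x : (i : Fin n) × Fin (α i) => z x.1),
        Fintype.prod_sigma]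
      simp
  · exact ⟨0, by simp, fun h' => absurd h' h⟩

theorem norm_monomial_le {n : ℕ} {z : Fin n → ℂ} {ρ : Fin n → ℝ}
    (hz : ∀ i, ‖z i‖ ≤ ρ i) (α : Fin n → ℕ) : ‖∏ i, z i ^ α i‖ ≤ ∏ i, ρ i ^ α i := by
  rw [norm_prod]
  refine Finset.prod_le_prod (fun _ _ => norm_nonneg _) fun i _ => ?_
  rw [norm_pow]
  exact pow_le_pow_left₀ (norm_nonneg _) (hz i) _

theorem exists_pos_le {n : ℕ} (ρ : Fin n → ℝ) (hρ : ∀ i, 0 < ρ i) :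
    ∃ r : ℝ, 0 < r ∧ ∀ i, r ≤ ρ i := by
  have h : ∀ᶠ r : ℝ in 𝓝[>] 0, ∀ i, r ≤ ρ i := by
    rw [eventually_all]
    intro i
    exact nhdsWithin_le_nhds ((eventually_lt_nhds (hρ i)).mono fun _ h => h.le)
  obtain ⟨r, hr, hr0⟩ := (h.and self_mem_nhdsWithin).exists
  exact ⟨r, hr0, hr⟩

/-- A sum over multi-indices can be grouped by total degree. -/
theorem hasSum_degree {n : ℕ} {E : Type*} [NormedAddCommGroup E] [CompleteSpace E]
    {f : (Fin n → ℕ) → E} (hf : Summable f) :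
    HasSum (fun m => ∑ α ∈ Finset.piAntidiag Finset.univ m, f α) (∑' α, f α) := by
  have h1 : HasSum (f ∘ Equiv.sigmaFiberEquiv (fun α : Fin n → ℕ => ∑ i, α i)) (∑' α, f α) :=
    (Equiv.hasSum_iff _).2 hf.hasSum
  refine h1.sigma fun m => ?_
  have : Fintype {α : Fin n → ℕ // ∑ i, α i = m} :=
    Fintype.subtype (Finset.piAntidiag Finset.univ m) (by simp)
  have h2 := hasSum_fintype (fun α : {α : Fin n → ℕ // ∑ i, α i = m} => f α)
  rw [← Finset.sum_subtype (Finset.piAntidiag Finset.univ m) (by simp) f] at h2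
  exact h2

/-- A power series converging absolutely at a point with positive coordinates is analytic at the
origin. -/
theorem analyticAt_of_summable {n : ℕ} (a : (Fin n → ℕ) → ℂ) (ρ : Fin n → ℝ)
    (hρ : ∀ i, 0 < ρ i) (ha : Summable fun α => ‖a α‖ * ∏ i, ρ i ^ α i) :
    AnalyticAt ℂ (fun z : Fin n → ℂ => ∑' α : Fin n → ℕ, a α * ∏ i, z i ^ α i) 0 := by
  obtain ⟨r, hr, hrρ⟩ := exists_pos_le ρ hρ
  have har : Summable fun α : Fin n → ℕ => ‖a α‖ * r ^ (∑ i, α i) := by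
    refine ha.of_nonneg_of_le (fun α => by positivity) fun α => ?_
    rw [← Finset.prod_pow_eq_pow_sum]
    gcongr with i
    exact hrρ i
  choose M hM1 hM using fun α : Fin n → ℕ => exists_multilinear_monomial α
  let p : FormalMultilinearSeries ℂ (Fin n → ℂ) ℂ :=
    fun m => ∑ α ∈ Finset.piAntidiag Finset.univ m, a α • M α m
  refine ⟨p, (ENNReal.ofReal r), ?_, by simpa using hr, ?_⟩
  · refine p.le_radius_of_summable (r := r.toNNReal) ?_
    refine (hasSum_degree har).summable.of_nonneg_of_le (fun m => by positivity) fun m => ?_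
    rw [Real.coe_toNNReal r hr.le]
    calc ‖p m‖ * r ^ m ≤ (∑ α ∈ Finset.piAntidiag Finset.univ m, ‖a α‖) * r ^ m := by
          gcongr
          refine norm_sum_le_of_le _ fun α _ => ?_
          rw [norm_smul]
          exact mul_le_of_le_one_right (norm_nonneg _) (hM1 α m)
      _ = _ := by
          rw [Finset.sum_mul]
          refine Finset.sum_congr rfl fun α hα => ?_
          rw [Finset.mem_piAntidiag] at hα
          rw [hα.1]
  · intro z hz
    have hz' : ∀ i, ‖z i‖ ≤ r := by
      intro i
      rw [Metric.eball_ofReal, mem_ball_zero_iff] at hz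
      exact (norm_le_pi_norm z i).trans hz.le
    have hs : Summable fun α : Fin n → ℕ => a α * ∏ i, z i ^ α i := by
      refine har.of_norm_bounded fun α => ?_
      rw [norm_mul, ← Finset.prod_pow_eq_pow_sum]
      gcongr
      exact norm_monomial_le hz' α
    rw [zero_add]
    convert hasSum_degree hs using 2 with m
    simp only [p, sum_apply, smul_apply,
      smul_eq_mul]
    refine Finset.sum_congr rfl fun α hα => ?_
    rw [Finset.mem_piAntidiag] at hα
    rw [hM α m hα.1]

/-- Terms `co c * φ (ex c)` of a summable family, collected by the value of `ex`. -/
theorem hasSum_collect {ι κ : Type*} (co : ι → ℂ) (ex : ι → κ) (φ : κ → ℂ)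
    (hS : Summable fun c => co c * φ (ex c)) :
    HasSum (fun α => (∑' c : {c : ι // ex c = α}, co c) * φ α) (∑' c, co c * φ (ex c)) := by
  have h1 : HasSum ((fun c => co c * φ (ex c)) ∘ Equiv.sigmaFiberEquiv ex)
      (∑' c, co c * φ (ex c)) := (Equiv.hasSum_iff _).2 hS.hasSum
  refine h1.sigma fun α => ?_
  have h2 := (h1.summable.sigma_factor α).hasSum
  have h3 : (∑' c : {c : ι // ex c = α}, co c) * φ α =
      ∑' c : {c : ι // ex c = α}, co c * φ (ex c) := by
    rw [← tsum_mul_right]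
    exact tsum_congr fun c => by rw [c.2]
  rw [h3]
  exact h2

/-- Every function analytic at the origin has a Taylor expansion there: its power series of
multilinear maps is expanded in the standard basis, and the terms are collected by monomial. -/
theorem AnalyticAt.exists_hasTaylorCoeffsAt {n : ℕ} {f : (Fin n → ℂ) → ℂ}
    (hf : AnalyticAt ℂ f 0) : ∃ a, HasTaylorCoeffsAt f a := by
  obtain ⟨p, R, hp⟩ := hf
  obtain ⟨r', hr'0, hr'⟩ : ∃ r' : NNReal, 0 < r' ∧ (r' : ℝ≥0∞) < R := by
    obtain ⟨x, hx0, hx⟩ := ENNReal.lt_iff_exists_nnreal_btwn.1 hp.r_pos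
    exact ⟨x, by simpa using hx0, hx⟩
  -- each of the `n ^ m` terms of degree `m` is at most `‖p m‖ * r ^ m`, where `n * r ≤ r'`
  let r : ℝ := r' / (n + 1)
  have hr0 : 0 < r := by positivity
  have hrr' : r ≤ r' := div_le_self (by positivity) (by linarith [n.cast_nonneg (α := ℝ)])
  let ι := (m : ℕ) × (Fin m → Fin n)
  let co : ι → ℂ := fun c => p c.1 fun j => Pi.single (c.2 j) 1
  let ex : ι → (Fin n → ℕ) := fun c i => (Finset.univ.filter fun j => c.2 j = i).card
  have hex : ∀ (c : ι) (z : Fin n → ℂ), ∏ j, z (c.2 j) = ∏ i, z i ^ ex c i := by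
    intro c z
    rw [← Finset.prod_fiberwise Finset.univ c.2]
    refine Finset.prod_congr rfl fun i _ => ?_
    rw [← Finset.prod_const]
    refine Finset.prod_congr rfl fun j hj => ?_
    rw [(Finset.mem_filter.1 hj).2]
  have hco : ∀ c : ι, ‖co c‖ ≤ ‖p c.1‖ := by
    intro c
    refine ((p c.1).le_opNorm _).trans ?_
    refine mul_le_of_le_one_right (norm_nonneg _) (Finset.prod_le_one (fun _ _ => norm_nonneg _) ?_)
    intro j _
    rw [Pi.norm_single, norm_one]
  have hmaj : Summable fun c : ι => ‖p c.1‖ * r ^ c.1 := by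
    rw [summable_sigma_of_nonneg (fun c => by positivity)]
    refine ⟨fun m => Summable.of_finite, ?_⟩
    refine (p.summable_norm_mul_pow (hr'.trans_le hp.r_le)).of_nonneg_of_le
      (fun m => tsum_nonneg fun _ => by positivity) fun m => ?_
    calc ∑' _ : Fin m → Fin n, ‖p m‖ * r ^ m = ‖p m‖ * (n * r) ^ m := by
          simp [mul_pow]
          ring
      _ ≤ ‖p m‖ * r' ^ m := by
        gcongr
        simp only [r]
        rw [mul_div_assoc', div_le_iff₀ (by positivity)]
        nlinarith [r'.coe_nonneg]
  refine ⟨fun α => ∑' c : {c : ι // ex c = α}, co c, Metric.ball 0 r,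
    Metric.ball_mem_nhds _ hr0, fun z hz => ?_⟩
  rw [mem_ball_zero_iff] at hz
  have hzr : ∀ i, ‖z i‖ ≤ r := fun i => (norm_le_pi_norm z i).trans hz.le
  have hbound : ∀ c : ι, ‖co c * ∏ i, z i ^ ex c i‖ ≤ ‖p c.1‖ * r ^ c.1 := by
    intro c
    rw [norm_mul, ← hex, norm_prod]
    gcongr
    · exact hco c
    · refine (Finset.prod_le_prod (fun _ _ => norm_nonneg _) fun j _ => hzr (c.2 j)).trans ?_
      simp
  have hS : Summable fun c : ι => co c * ∏ i, z i ^ ex c i := hmaj.of_norm_bounded hbound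
  -- summing degree by degree gives `f z`
  have hfz : ∑' c : ι, co c * ∏ i, z i ^ ex c i = f z := by
    have h1 := hp.hasSum (y := z) (by
      refine Metric.eball_subset_eball (hr'.le) ?_
      rw [Metric.eball_coe, mem_ball_zero_iff]
      exact hz.trans_le hrr')
    rw [zero_add] at h1
    refine (hS.hasSum.sigma fun m => ?_).unique h1
    have h2 : p m (fun _ => z) = ∑ c : Fin m → Fin n, co ⟨m, c⟩ * ∏ i, z i ^ ex ⟨m, c⟩ i := by
      have hz2 : z = ∑ i, z i • Pi.single (M := fun _ : Fin n => ℂ) i 1 := by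
        ext k
        simp [Finset.sum_apply, Pi.single_apply]
      conv_lhs => rw [hz2]
      rw [(p m).map_sum]
      refine Finset.sum_congr rfl fun c _ => ?_
      rw [(p m).map_smul_univ, smul_eq_mul, mul_comm, ← hex]
    rw [h2]
    exact hasSum_fintype _
  -- summing monomial by monomial gives the Taylor series
  have h3 := hasSum_collect co ex (fun α => ∏ i, z i ^ α i) hS
  exact ⟨h3.summable, by rw [h3.tsum_eq, hfz]⟩

/-- A Taylor expansion of `f` converges absolutely at every point with small nonnegative
coordinates `ρ i`, and represents `f` on the closed polydisc with radii `ρ i`. -/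
theorem HasTaylorCoeffsAt.eventually {n : ℕ} {f : (Fin n → ℂ) → ℂ} {a : (Fin n → ℕ) → ℂ}
    (h : HasTaylorCoeffsAt f a) : ∃ r : ℝ, 0 < r ∧ ∀ ρ : Fin n → ℝ, (∀ i, 0 ≤ ρ i) →
      (∀ i, ρ i < r) → (Summable fun α => ‖a α‖ * ∏ i, ρ i ^ α i) ∧
      ∀ z : Fin n → ℂ, (∀ i, ‖z i‖ ≤ ρ i) → f z = ∑' α : Fin n → ℕ, a α * ∏ i, z i ^ α i := by
  obtain ⟨U, hU, h⟩ := h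
  obtain ⟨r, hr, hrU⟩ := Metric.mem_nhds_iff.1 hU
  refine ⟨r, hr, fun ρ hρ0 hρ => ⟨?_, fun z hz => (h z (hrU ?_)).2⟩⟩
  · have := (h (fun i => (ρ i : ℂ)) (hrU ?_)).1.norm
    · refine this.congr fun α => ?_
      simp only [norm_mul, norm_prod, norm_pow, Complex.norm_real, Real.norm_eq_abs,
        abs_of_nonneg (hρ0 _)]
    · rw [mem_ball_zero_iff, pi_norm_lt_iff hr]
      intro i
      simpa [abs_of_nonneg (hρ0 i)] using hρ i
  · rw [mem_ball_zero_iff, pi_norm_lt_iff hr]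
    exact fun i => (hz i).trans_lt (hρ i)

/-! ### Exponents and the monomial order -/

/-- Finitely many initial monomials are detected by a positive integral weight: `z^β` has strictly
smaller weight than every monomial that follows it. The weights decrease geometrically along the
variables, with a ratio exceeding all the degrees in `B`, and are shifted by a large constant so
that the total degree dominates. -/
theorem exists_weight {n : ℕ} (B : Finset (Fin n → ℕ)) :
    ∃ W : Fin n → ℕ, (∀ i, 0 < W i) ∧ ∀ β ∈ B, ∀ γ, monLE β γ → β ≠ γ →
      ∑ i, W i * β i < ∑ i, W i * γ i := by
  set D : ℕ := ∑ β ∈ B, ∑ i, β i with hD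
  refine ⟨fun i => (D + 1) ^ (n + 1) + (D + 1) ^ (n - (i : ℕ)), fun i => by positivity, ?_⟩
  intro β hβ γ hle hne
  have hdeg : ∑ i, β i ≤ D :=
    Finset.single_le_sum (f := fun β : Fin n → ℕ => ∑ i, β i) (fun _ _ => Nat.zero_le _) hβ
  simp only [add_mul, Finset.sum_add_distrib, ← Finset.mul_sum]
  rcases hle with h | h | ⟨hd, i₀, hi₀, hlt⟩
  · exact absurd h hne
  · have h1 : ∑ i : Fin n, (D + 1) ^ (n - (i : ℕ)) * β i ≤ (D + 1) ^ n * D := by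
      calc _ ≤ ∑ i : Fin n, (D + 1) ^ n * β i := by
            gcongr
            · omega
            · omega
        _ = (D + 1) ^ n * ∑ i, β i := by rw [Finset.mul_sum]
        _ ≤ _ := by gcongr
    have h2 : (D + 1) ^ n * D < (D + 1) ^ (n + 1) := by
      rw [pow_succ]
      exact Nat.mul_lt_mul_of_pos_left (by omega) (by positivity)
    have h3 : (D + 1) ^ (n + 1) * (∑ i, β i + 1) ≤ (D + 1) ^ (n + 1) * ∑ i, γ i := by
      gcongr
      omega
    rw [mul_add, mul_one] at h3
    omega
  · rw [hd]
    have hin : (i₀ : ℕ) < n := i₀.2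
    set K := (D + 1) ^ (n - (i₀ : ℕ) - 1) with hK
    have hKpos : 0 < K := by positivity
    have hwi : (D + 1) ^ (n - (i₀ : ℕ)) = K * (D + 1) := by
      rw [hK, ← pow_succ]
      congr 1
      omega
    -- the gain at `i₀` beats the total loss at later variables, whose weights are at most `K`
    have hterm : ∀ j : Fin n, (D + 1) ^ (n - (j : ℕ)) * β j + (if j = i₀ then K * (D + 1) else 0) ≤
        (D + 1) ^ (n - (j : ℕ)) * γ j + K * β j := by
      intro j
      rcases lt_trichotomy j i₀ with hj | hj | hj
      · rw [if_neg hj.ne, hlt j hj]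
        omega
      · subst hj
        rw [if_pos rfl, hwi]
        have : K * (D + 1) * (β j + 1) ≤ K * (D + 1) * γ j := by
          gcongr
          omega
        rw [mul_add, mul_one] at this
        omega
      · rw [if_neg hj.ne']
        have : (D + 1) ^ (n - (j : ℕ)) ≤ K := by
          rw [hK]
          apply Nat.pow_le_pow_right (by omega)
          have : (i₀ : ℕ) < j := hj
          omega
        have := Nat.mul_le_mul_right (β j) this
        omega
    have hsum := Finset.sum_le_sum fun j (_ : j ∈ Finset.univ) => hterm j
    rw [Finset.sum_add_distrib, Finset.sum_add_distrib, Finset.sum_ite_eq' Finset.univ i₀,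
      if_pos (Finset.mem_univ _), ← Finset.mul_sum] at hsum
    have h4 : K * ∑ i, β i ≤ K * D := by gcongr
    rw [mul_add, mul_one] at hsum
    omega

theorem exists_monLE_min {n : ℕ} (S : Set (Fin n → ℕ)) (hS : S.Nonempty) :
    ∃ α ∈ S, ∀ β ∈ S, monLE α β := by
  obtain ⟨α₁, hα₁, hmin₁⟩ := (measure fun α : Fin n → ℕ => ∑ i, α i).wf.has_min S hS
  obtain ⟨α, ⟨hα, hd⟩, hmin⟩ := (InvImage.wf (fun α : Fin n → ℕ => toLex α)
    (wellFounded_lt : WellFounded ((· < ·) : Lex (Fin n → ℕ) → _ → Prop))).has_min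
    {α ∈ S | ∑ i, α i = ∑ i, α₁ i} ⟨α₁, hα₁, rfl⟩
  refine ⟨α, hα, fun β hβ => ?_⟩
  have h1 : ¬ (∑ i, β i < ∑ i, α₁ i) := hmin₁ β hβ
  rcases eq_or_ne (∑ i, β i) (∑ i, α₁ i) with h | h
  · have h2 : ¬ (toLex β < toLex α) := hmin β ⟨hβ, h⟩
    rcases (not_lt.1 h2).eq_or_lt with h3 | ⟨i, hi, hlt⟩
    · exact Or.inl (toLex.injective h3)
    · exact Or.inr (Or.inr ⟨by rw [hd, h], i, hlt, hi⟩)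
  · exact Or.inr (Or.inl (by omega))

/-- Dickson's lemma: every set of exponents has a finite subset below all of its elements. -/
theorem exists_finset_basis {n : ℕ} (S : Set (Fin n → ℕ)) :
    ∃ B : Finset (Fin n → ℕ), ↑B ⊆ S ∧ ∀ α ∈ S, ∃ β ∈ B, β ≤ α := by
  have hfin : {β | Minimal (· ∈ S) β}.Finite :=
    WellQuasiOrderedLE.finite_of_isAntichain (setOfPred_minimal_antichain _)
  refine ⟨hfin.toFinset, fun β hβ => ?_, fun α hα => ?_⟩
  · exact (hfin.mem_toFinset.1 hβ).prop
  · obtain ⟨β, hle, hβ⟩ := exists_minimal_le_of_wellFoundedLT (· ∈ S) α hα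
    exact ⟨β, hfin.mem_toFinset.2 hβ, hle⟩

/-! ### Domination by the leading term -/

theorem prod_pow_weight {n : ℕ} (ε : ℝ) (W α : Fin n → ℕ) :
    ∏ i, (ε ^ W i) ^ α i = ε ^ ∑ i, W i * α i := by
  simp_rw [← pow_mul, Finset.prod_pow_eq_pow_sum]

/-- On the polydiscs with radii `ε ^ W i`, a term of strictly least weight dominates all the others
as `ε → 0`. -/
theorem eventually_dominates {n : ℕ} (a : (Fin n → ℕ) → ℂ) (β W : Fin n → ℕ) {ε₀ : ℝ}
    (hε₀ : 0 < ε₀) (hs : Summable fun α => ‖a α‖ * ∏ i, (ε₀ ^ W i) ^ α i) (hβ : a β ≠ 0)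
    (hW : ∀ γ, a γ ≠ 0 → γ ≠ β → ∑ i, W i * β i < ∑ i, W i * γ i) :
    ∀ᶠ ε in 𝓝[>] (0 : ℝ),
      (∑' γ, if γ = β then 0 else ‖a γ‖ * ∏ i, (ε ^ W i) ^ γ i) ≤
        1 / 2 * (‖a β‖ * ∏ i, (ε ^ W i) ^ β i) := by
  simp only [prod_pow_weight] at hs ⊢
  set L := ∑ i, W i * β i with hL
  set C := ∑' γ, ‖a γ‖ * ε₀ ^ ∑ i, W i * γ i with hC
  have hlim : Tendsto (fun ε : ℝ => ε * (C / ε₀ ^ (L + 1))) (𝓝[>] 0) (𝓝 0) := by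
    have : Tendsto (fun ε : ℝ => ε * (C / ε₀ ^ (L + 1))) (𝓝 0) (𝓝 (0 * (C / ε₀ ^ (L + 1)))) :=
      tendsto_id.mul_const _
    rw [zero_mul] at this
    exact this.mono_left nhdsWithin_le_nhds
  have hpos : 0 < 1 / 2 * ‖a β‖ := by positivity
  filter_upwards [hlim.eventually_lt_const hpos, self_mem_nhdsWithin,
    nhdsWithin_le_nhds (eventually_lt_nhds hε₀)] with ε h1 h2 h3
  have hε : 0 < ε := h2
  have hq1 : ε / ε₀ ≤ 1 := (div_le_one hε₀).2 h3.le
  have hle : ∀ γ, (if γ = β then 0 else ‖a γ‖ * ε ^ ∑ i, W i * γ i) ≤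
      ‖a γ‖ * ε₀ ^ (∑ i, W i * γ i) * (ε / ε₀) ^ (L + 1) := by
    intro γ
    split_ifs with h
    · positivity
    · by_cases h0 : a γ = 0
      · simp [h0]
      · rw [mul_assoc]
        gcongr
        calc ε ^ (∑ i, W i * γ i) = ε₀ ^ (∑ i, W i * γ i) * (ε / ε₀) ^ (∑ i, W i * γ i) := by
              rw [← mul_pow, mul_div_cancel₀ _ hε₀.ne']
          _ ≤ _ := by
              gcongr ?_ * ?_
              exact pow_le_pow_of_le_one (by positivity) hq1 (hW γ h0 h)
  have hmaj := hs.mul_right ((ε / ε₀) ^ (L + 1))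
  have hsum : Summable fun γ => if γ = β then 0 else ‖a γ‖ * ε ^ ∑ i, W i * γ i :=
    hmaj.of_nonneg_of_le (fun γ => by split_ifs <;> positivity) hle
  calc _ ≤ C * (ε / ε₀) ^ (L + 1) := by
        rw [hC, ← tsum_mul_right]
        exact hsum.tsum_le_tsum hle hmaj
    _ = ε * (C / ε₀ ^ (L + 1)) * ε ^ L := by
        rw [div_pow, pow_succ ε]
        ring
    _ ≤ 1 / 2 * ‖a β‖ * ε ^ L := by gcongr
    _ = _ := by ring

/-! ### Perturbed bases of `ℓ¹` -/

theorem l1_summable {κ : Type*} (s : lp (fun _ : κ => ℂ) 1) : Summable fun α => ‖s α‖ := by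
  simpa using (lp.memℓp s).summable (by simp)

theorem l1_norm {κ : Type*} (s : lp (fun _ : κ => ℂ) 1) : ‖s‖ = ∑' α, ‖s α‖ := by
  simpa using lp.norm_eq_tsum_rpow (by simp) s

theorem l1_summable_smul {κ F : Type*} [NormedAddCommGroup F] [NormedSpace ℂ F] [CompleteSpace F]
    {u : κ → F} {C : ℝ} (hu : ∀ α, ‖u α‖ ≤ C) (s : lp (fun _ : κ => ℂ) 1) :
    Summable fun α => s α • u α := by
  refine ((l1_summable s).mul_right C).of_norm_bounded fun α => ?_
  rw [norm_smul]
  gcongr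
  exact hu α

/-- The continuous linear map `s ↦ ∑ s α • u α` from `ℓ¹` defined by a bounded family `u`. -/
def l1Synth {κ F : Type*} [NormedAddCommGroup F] [NormedSpace ℂ F] [CompleteSpace F]
    (u : κ → F) (C : ℝ) (hu : ∀ α, ‖u α‖ ≤ C) : lp (fun _ : κ => ℂ) 1 →L[ℂ] F :=
  LinearMap.mkContinuous
    { toFun := fun s => ∑' α, s α • u α
      map_add' := fun s t => by
        rw [← (l1_summable_smul hu s).tsum_add (l1_summable_smul hu t)]
        exact tsum_congr fun α => by rw [lp.coeFn_add, Pi.add_apply, add_smul]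
      map_smul' := fun c s => by
        rw [RingHom.id_apply, ← (l1_summable_smul hu s).tsum_const_smul]
        exact tsum_congr fun α => by rw [lp.coeFn_smul, Pi.smul_apply, smul_assoc] }
    C fun s => by
      rw [l1_norm, ← tsum_mul_left]
      refine tsum_of_norm_bounded ((l1_summable s).mul_left C).hasSum fun α => ?_
      rw [norm_smul, mul_comm]
      gcongr
      exact hu α

theorem l1Synth_hasSum {κ F : Type*} [NormedAddCommGroup F] [NormedSpace ℂ F] [CompleteSpace F]
    {u : κ → F} {C : ℝ} (hu : ∀ α, ‖u α‖ ≤ C) (s : lp (fun _ : κ => ℂ) 1) :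
    HasSum (fun α => s α • u α) (l1Synth u C hu s) := (l1_summable_smul hu s).hasSum

theorem l1Synth_norm_le {κ F : Type*} [NormedAddCommGroup F] [NormedSpace ℂ F] [CompleteSpace F]
    {u : κ → F} {C : ℝ} (hC : 0 ≤ C) (hu : ∀ α, ‖u α‖ ≤ C) : ‖l1Synth u C hu‖ ≤ C :=
  LinearMap.mkContinuous_norm_le _ hC _

theorem l1Synth_single {κ F : Type*} [DecidableEq κ] [NormedAddCommGroup F] [NormedSpace ℂ F] [CompleteSpace F]
    {u : κ → F} {C : ℝ} (hu : ∀ α, ‖u α‖ ≤ C) (γ : κ) :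
    l1Synth u C hu (lp.single 1 γ (1 : ℂ)) = u γ := by
  have h := hasSum_single (f := fun α => (lp.single 1 γ (1 : ℂ) : lp (fun _ : κ => ℂ) 1) α • u α) γ
    (fun α hα => by rw [lp.single_apply_ne _ _ _ hα, zero_smul])
  rw [lp.single_apply_self, one_smul] at h
  exact (l1Synth_hasSum hu _).unique h

/-- A family of vectors of `ℓ¹` within distance `1/2` of the unit vectors still spans: the
difference between its synthesis map and the identity has norm at most `1/2`. -/
theorem l1_exists_hasSum {κ : Type*} [DecidableEq κ] (u : κ → lp (fun _ : κ => ℂ) 1)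
    (hu : ∀ α, ‖lp.single 1 α (1 : ℂ) - u α‖ ≤ 1 / 2) (x : lp (fun _ : κ => ℂ) 1) :
    ∃ s : lp (fun _ : κ => ℂ) 1, HasSum (fun α => s α • u α) x := by
  let T := l1Synth (fun α => lp.single 1 α (1 : ℂ) - u α) (1 / 2) hu
  have hT : ‖T‖ < 1 := (l1Synth_norm_le (by norm_num) hu).trans_lt (by norm_num)
  let v := Units.oneSub T hT
  let s := v⁻¹.val x
  have hs : s - T s = x := by
    have h1 : v.val * v⁻¹.val = 1 := v.mul_inv
    have h2 := congrArg (fun A => A x) h1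
    exact h2
  refine ⟨s, ?_⟩
  have h1 := l1Synth_hasSum hu s
  have h2 : HasSum (fun α => s α • (lp.single 1 α (1 : ℂ) : lp (fun _ : κ => ℂ) 1)) s := by
    have := lp.hasSum_single (p := 1) (by simp) s
    convert this using 2 with α
    rw [← lp.single_smul, smul_eq_mul, mul_one]
  have h3 := h2.sub h1
  rw [show s - l1Synth _ _ hu s = x from hs] at h3
  convert h3 using 2 with α
  rw [smul_sub, sub_sub_cancel]

/-! ### Division with remainder -/

/-- Division with remainder by convergent power series `G β` with initial monomials `z^β`, `β ∈ B`:
the remainder contains no monomial divisible by some `z^β`. -/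
theorem exists_division {n : ℕ} (B : Finset (Fin n → ℕ))
    (G : (Fin n → ℕ) → (Fin n → ℂ) → ℂ) (A : (Fin n → ℕ) → (Fin n → ℕ) → ℂ)
    (hG : ∀ β ∈ B, HasTaylorCoeffsAt (G β) (A β)) (hA : ∀ β ∈ B, A β β ≠ 0)
    (hmin : ∀ β ∈ B, ∀ γ, A β γ ≠ 0 → monLE β γ)
    {f : (Fin n → ℂ) → ℂ} {a : (Fin n → ℕ) → ℂ} (hf : HasTaylorCoeffsAt f a) :
    ∃ (q : (Fin n → ℕ) → (Fin n → ℂ) → ℂ) (r : (Fin n → ℂ) → ℂ) (c : (Fin n → ℕ) → ℂ),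
      (∀ β ∈ B, AnalyticAt ℂ (q β) 0) ∧ HasTaylorCoeffsAt r c ∧
      (∀ α, c α ≠ 0 → ∀ β ∈ B, ¬ β ≤ α) ∧
      ∀ᶠ z in 𝓝 (0 : Fin n → ℂ), f z = ∑ β ∈ B, q β z * G β z + r z := by
  classical
  obtain ⟨W, hWpos, hW⟩ := exists_weight B
  -- radii `ρ i = ε ^ W i` for which every `z^β` dominates its series `A β`
  have hsmall : ∀ r : ℝ, 0 < r → ∀ᶠ ε in 𝓝[>] (0 : ℝ), ∀ i, ε ^ W i < r := by
    intro r hr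
    rw [eventually_all]
    intro i
    have : Tendsto (fun ε : ℝ => ε ^ W i) (𝓝 0) (𝓝 (0 ^ W i)) := tendsto_id.pow _
    rw [zero_pow (hWpos i).ne'] at this
    exact (this.mono_left nhdsWithin_le_nhds).eventually_lt_const hr
  have hconv : ∀ {f : (Fin n → ℂ) → ℂ} {a : (Fin n → ℕ) → ℂ}, HasTaylorCoeffsAt f a →
      ∀ᶠ ε in 𝓝[>] (0 : ℝ), (Summable fun α => ‖a α‖ * ∏ i, (ε ^ W i) ^ α i) ∧
        ∀ z : Fin n → ℂ, (∀ i, ‖z i‖ ≤ ε ^ W i) → f z = ∑' α : Fin n → ℕ, a α * ∏ i, z i ^ α i := by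
    intro f a h
    obtain ⟨r, hr, h⟩ := h.eventually
    filter_upwards [hsmall r hr, self_mem_nhdsWithin] with ε h1 h2
    have h2' : 0 < ε := h2
    exact h _ (fun i => by positivity) h1
  have hdom : ∀ β ∈ B, ∀ᶠ ε in 𝓝[>] (0 : ℝ),
      (∑' γ, if γ = β then 0 else ‖A β γ‖ * ∏ i, (ε ^ W i) ^ γ i) ≤
        1 / 2 * (‖A β β‖ * ∏ i, (ε ^ W i) ^ β i) := by
    intro β hβ
    obtain ⟨ε₀, h1, h2⟩ := ((hconv (hG β hβ)).and self_mem_nhdsWithin).exists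
    exact eventually_dominates (A β) β W h2 h1.1 (hA β hβ)
      fun γ h3 h4 => hW β hβ γ (hmin β hβ γ h3) h4.symm
  obtain ⟨ε, ⟨⟨hfε, hε⟩, hGε⟩, hdomε⟩ := ((((hconv hf).and self_mem_nhdsWithin).and
    ((B.eventually_all).2 fun β hβ => hconv (hG β hβ))).and ((B.eventually_all).2 hdom)).exists
  have hε : 0 < ε := hε
  set ρ : Fin n → ℝ := fun i => ε ^ W i with hρdef
  have hρ : ∀ i, 0 < ρ i := fun i => by positivity
  clear_value ρ
  have hρsimp : ∀ i, ε ^ W i = ρ i := fun i => by rw [hρdef]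
  simp only [hρsimp] at hfε hGε hdomε
  clear hρdef hρsimp hdom hconv hsmall
  let P : (Fin n → ℕ) → ℝ := fun α => ∏ i, ρ i ^ α i
  have hP : ∀ α, 0 < P α := fun α => Finset.prod_pos fun i _ => pow_pos (hρ i) _
  have hPadd : ∀ α β, P (α + β) = P α * P β := fun α β => by
    simp only [P, Pi.add_apply, pow_add, Finset.prod_mul_distrib]
  have hPc : ∀ α, (P α : ℂ) ≠ 0 := fun α => by exact_mod_cast (hP α).ne'
  have hPn : ∀ α, ‖(P α : ℂ)‖ = P α := fun α => by
    rw [Complex.norm_real, Real.norm_of_nonneg (hP α).le]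
  have hmadd : ∀ (z : Fin n → ℂ) (α β : Fin n → ℕ),
      ∏ i, z i ^ (α + β) i = (∏ i, z i ^ α i) * ∏ i, z i ^ β i := fun z α β => by
    simp only [Pi.add_apply, pow_add, Finset.prod_mul_distrib]
  -- the divisor `b α` used for the monomial `z^α`, when there is one
  let D : (Fin n → ℕ) → Prop := fun α => ∃ β ∈ B, β ≤ α
  obtain ⟨b, hb⟩ : ∃ b : (Fin n → ℕ) → Fin n → ℕ, ∀ α, D α → b α ∈ B ∧ b α ≤ α := by
    have : ∀ α, ∃ β, D α → β ∈ B ∧ β ≤ α := fun α => by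
      by_cases h : D α
      · obtain ⟨β, h1, h2⟩ := h
        exact ⟨β, fun _ => ⟨h1, h2⟩⟩
      · exact ⟨0, fun h' => absurd h' h⟩
    exact ⟨fun α => (this α).choose, fun α => (this α).choose_spec⟩
  let e : (Fin n → ℕ) → lp (fun _ : Fin n → ℕ => ℂ) 1 := fun α => lp.single 1 α (1 : ℂ)
  have he : ∀ α, ‖e α‖ = 1 := fun α => by simp only [e]; rw [lp.norm_single (by simp), norm_one]
  -- `e α` stands for `z^α / P α`; `u α` stands for `z^(α - b α) * G (b α)`, normalised so that its
  -- leading term is `e α`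
  let t : (Fin n → ℕ) → (Fin n → ℕ) → lp (fun _ : Fin n → ℕ => ℂ) 1 := fun α δ =>
    (A (b α) δ / A (b α) (b α) * (P (δ + (α - b α)) / P α)) • e (δ + (α - b α))
  let u : (Fin n → ℕ) → lp (fun _ : Fin n → ℕ => ℂ) 1 := fun α =>
    if D α then ∑' δ, t α δ else e α
  have hPsub : ∀ α, D α → P α = P (b α) * P (α - b α) := fun α h => by
    rw [← hPadd, add_tsub_cancel_of_le (hb α h).2]
  have htn : ∀ α, D α → ∀ δ, ‖t α δ‖ =
      ‖A (b α) δ‖ * P δ * (‖A (b α) (b α)‖ * P (b α))⁻¹ := by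
    intro α h δ
    have h0 : ‖A (b α) (b α)‖ ≠ 0 := norm_ne_zero_iff.2 (hA _ (hb α h).1)
    have h1 := (hP (b α)).ne'
    have h2 := (hP (α - b α)).ne'
    simp only [t]
    rw [norm_smul, he, mul_one, norm_mul, norm_div, norm_div, hPn, hPn, hPadd, hPsub α h]
    field_simp
  have hts : ∀ α, D α → Summable (t α) := fun α h => by
    refine Summable.of_norm ?_
    simp only [htn α h]
    exact (hGε _ (hb α h).1).1.mul_right _
  have hu : ∀ α, ‖lp.single 1 α (1 : ℂ) - u α‖ ≤ 1 / 2 := by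
    intro α
    change ‖e α - u α‖ ≤ 1 / 2
    by_cases h : D α
    · have hβB := (hb α h).1
      have hlead : t α (b α) = e α := by
        simp only [t]
        rw [add_tsub_cancel_of_le (hb α h).2, div_self (hA _ hβB), div_self (hPc α), one_mul,
          one_smul]
      simp only [u, if_pos h]
      rw [(hts α h).tsum_eq_add_tsum_ite (b α), hlead, sub_add_cancel_left, norm_neg]
      have hpos : 0 < ‖A (b α) (b α)‖ * P (b α) :=
        mul_pos (norm_pos_iff.2 (hA _ hβB)) (hP _)
      have hS : Summable fun δ => if δ = b α then 0 else ‖A (b α) δ‖ * P δ := by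
        refine (hGε _ hβB).1.of_nonneg_of_le (fun δ => ?_) fun δ => ?_
        · split_ifs
          · exact le_rfl
          · exact mul_nonneg (norm_nonneg _) (hP δ).le
        · split_ifs
          · exact mul_nonneg (norm_nonneg _) (hP δ).le
          · exact le_rfl
      refine (tsum_of_norm_bounded (hS.mul_right (‖A (b α) (b α)‖ * P (b α))⁻¹).hasSum
        fun δ => ?_).trans ?_
      · split_ifs
        · simp
        · rw [htn α h]
      · rw [tsum_mul_right, ← div_eq_mul_inv, div_le_iff₀ hpos]
        exact hdomε _ hβB
    · simp only [u, if_neg h, sub_self, norm_zero]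
      norm_num
  -- the series `f` as an element of `ℓ¹`, expanded along the `u α`
  have hxs : Summable fun α => (a α * P α) • e α := by
    refine Summable.of_norm ?_
    refine hfε.1.congr fun α => ?_
    rw [norm_smul, he, mul_one, norm_mul, hPn]
  obtain ⟨s, hs⟩ := l1_exists_hasSum u hu (∑' α, (a α * P α) • e α)
  have hs1 : Summable fun α => ‖s α‖ := l1_summable s
  let qc : (Fin n → ℕ) → (Fin n → ℕ) → ℂ := fun β γ =>
    if D (γ + β) ∧ b (γ + β) = β then s (γ + β) / (A β β * P (γ + β)) else 0
  let c : (Fin n → ℕ) → ℂ := fun α => if D α then 0 else s α / P α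
  have hqs : ∀ β ∈ B, Summable fun γ => ‖qc β γ‖ * P γ := by
    intro β hβ
    have hinj : Function.Injective fun γ : Fin n → ℕ => γ + β := add_left_injective β
    refine ((hs1.comp_injective hinj).mul_right (‖A β β‖ * P β)⁻¹).of_nonneg_of_le
      (fun γ => mul_nonneg (norm_nonneg _) (hP γ).le) fun γ => ?_
    have h0 : 0 < ‖A β β‖ := norm_pos_iff.2 (hA _ hβ)
    have h1 := hP β
    have h2 := hP γ
    simp only [qc, Function.comp_apply]
    split_ifs
    · rw [norm_div, norm_mul, hPn, hPadd]
      apply le_of_eq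
      field_simp
    · rw [norm_zero, zero_mul]
      positivity
  have hcs : Summable fun α => ‖c α‖ * P α := by
    refine hs1.of_nonneg_of_le (fun γ => mul_nonneg (norm_nonneg _) (hP γ).le) fun α => ?_
    simp only [c]
    split_ifs
    · simp
    · rw [norm_div, hPn, div_mul_cancel₀ _ (hP α).ne']
  obtain ⟨r₀, hr₀, hr₀ρ⟩ := exists_pos_le ρ hρ
  have hball : ∀ z ∈ Metric.ball (0 : Fin n → ℂ) r₀, ∀ i, ‖z i‖ ≤ ρ i := by
    intro z hz i
    rw [mem_ball_zero_iff] at hz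
    exact ((norm_le_pi_norm z i).trans hz.le).trans (hr₀ρ i)
  have hsummable : ∀ {d : (Fin n → ℕ) → ℂ} {z : Fin n → ℂ}, (Summable fun α => ‖d α‖ * P α) →
      (∀ i, ‖z i‖ ≤ ρ i) → Summable fun α => d α * ∏ i, z i ^ α i := by
    intro d z hd hz
    refine hd.of_norm_bounded fun α => ?_
    rw [norm_mul]
    exact mul_le_mul_of_nonneg_left (norm_monomial_le hz α) (norm_nonneg _)
  refine ⟨fun β z => ∑' γ, qc β γ * ∏ i, z i ^ γ i, fun z => ∑' γ, c γ * ∏ i, z i ^ γ i, c,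
    fun β hβ => analyticAt_of_summable _ ρ hρ (hqs β hβ),
    ⟨Metric.ball 0 r₀, Metric.ball_mem_nhds _ hr₀,
      fun z hz => ⟨hsummable hcs (hball z hz), rfl⟩⟩, ?_, ?_⟩
  · intro α hα β hβ hle
    exact hα (if_pos ⟨β, hβ, hle⟩)
  filter_upwards [Metric.ball_mem_nhds _ hr₀] with z hz
  have hz := hball z hz
  -- evaluation at `z` is a bounded functional on `ℓ¹`
  have hev : ∀ α, ‖(∏ i, z i ^ α i) / (P α : ℂ)‖ ≤ 1 := fun α => by
    rw [norm_div, hPn, div_le_one (hP α)]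
    exact norm_monomial_le hz α
  let ev := l1Synth (fun α => (∏ i, z i ^ α i) / (P α : ℂ)) 1 hev
  have heve : ∀ α, ev (e α) = (∏ i, z i ^ α i) / (P α : ℂ) := fun α => l1Synth_single hev α
  have hevx : ev (∑' α, (a α * P α) • e α) = f z := by
    rw [ev.map_tsum hxs, hfε.2 z hz]
    refine tsum_congr fun α => ?_
    rw [map_smul, heve, smul_eq_mul, mul_assoc, mul_div_cancel₀ _ (hPc α)]
  have hevu : ∀ α, D α → ev (u α) =
      (∏ i, z i ^ (α - b α) i) / (A (b α) (b α) * P α) * G (b α) z := by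
    intro α h
    simp only [u, if_pos h]
    rw [ev.map_tsum (hts α h), (hGε _ (hb α h).1).2 z hz, ← tsum_mul_left]
    refine tsum_congr fun δ => ?_
    simp only [t]
    rw [map_smul, heve, smul_eq_mul, hmadd]
    have h0 := hA _ (hb α h).1
    have h1 := hPc α
    have h2 := hPc (δ + (α - b α))
    field_simp
  have hsum1 : HasSum (fun α => s α * ev (u α)) (f z) := by
    have := ev.hasSum hs
    rw [hevx] at this
    simpa only [map_smul, smul_eq_mul] using this
  -- the same sum, split according to the divisor used
  have hsumB : ∀ β ∈ B, HasSum
      (fun α => if D α ∧ b α = β then s α * ev (u α) else 0)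
      ((∑' γ, qc β γ * ∏ i, z i ^ γ i) * G β z) := by
    intro β hβ
    have hinj : Function.Injective fun γ : Fin n → ℕ => γ + β := add_left_injective β
    rw [← hinj.hasSum_iff]
    · refine ((hsummable (hqs β hβ) hz).hasSum.mul_right (G β z)).congr_fun fun γ => ?_
      simp only [qc, Function.comp_apply]
      split_ifs with h
      · rw [hevu _ h.1, h.2, add_tsub_cancel_right]
        ring
      · simp
    · intro α hα
      refine if_neg fun h => hα ⟨α - β, ?_⟩
      have := (hb α h.1).2
      rw [h.2] at this
      exact tsub_add_cancel_of_le this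
  have hsumr : HasSum (fun α => if D α then 0 else s α * ev (u α))
      (∑' γ, c γ * ∏ i, z i ^ γ i) := by
    convert (hsummable hcs hz).hasSum using 2 with α
    simp only [c]
    split_ifs with h
    · simp
    · simp only [u, if_neg h]
      rw [heve]
      ring
  have hsum2 := (hasSum_sum hsumB).add hsumr
  refine hsum1.unique ?_
  convert hsum2 using 2 with α
  by_cases h : D α
  · simp only [h, true_and, if_true, add_zero]
    rw [Finset.sum_ite_eq, if_pos (hb α h).1]
  · simp [h]

/-! ### Generation of the ideal -/

/-- If `g₁, …, g_k` are elements of an ideal `ℐ` of `𝒪_{ℂⁿ,0}` whose initial monomials generate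
the same monomial ideal as the initial monomials of all elements of `ℐ` (a standard basis),
then `g₁, …, g_k` generate `ℐ`. -/
theorem standard_basis_generates
    {n k : ℕ} (I : Ideal (HoloGerms n)) (g : Fin k → HoloGerms n) (hg : ∀ i, g i ∈ I)
    (hIM : ∀ α : Fin n → ℕ,
      (∃ F ∈ I, ∃ β, GermIsInitialMonomialOf β (F : GermAt0 n) ∧ β ≤ α) ↔
      (∃ i, ∃ β, GermIsInitialMonomialOf β ((g i : HoloGerms n) : GermAt0 n) ∧ β ≤ α)) :
    I = Ideal.span (Set.range g) := by
  classical
  have hspan : Ideal.span (Set.range g) ≤ I := by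
    rw [Ideal.span_le]
    rintro _ ⟨i, rfl⟩
    exact hg i
  refine le_antisymm (fun F hF => ?_) hspan
  obtain ⟨B, hBS, hB⟩ := exists_finset_basis
    {β | ∃ i, GermIsInitialMonomialOf β ((g i : HoloGerms n) : GermAt0 n)}
  -- a generator, a representative of it and its Taylor coefficients for each exponent in `B`
  have hdata : ∀ β, ∃ (i : B → Fin k) (f : (Fin n → ℂ) → ℂ) (a : (Fin n → ℕ) → ℂ),
      ∀ h : β ∈ B, ((g (i ⟨β, h⟩) : HoloGerms n) : GermAt0 n) = (f : GermAt0 n) ∧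
        HasTaylorCoeffsAt f a ∧ a β ≠ 0 ∧ ∀ γ, a γ ≠ 0 → monLE β γ := by
    intro β
    by_cases h : β ∈ B
    · obtain ⟨i, f, a, h1⟩ := hBS h
      exact ⟨fun _ => i, f, a, fun _ => h1⟩
    · refine ⟨fun x => (hBS x.2).choose, 0, 0, fun h' => absurd h' h⟩
  choose i G A hGA using hdata
  obtain ⟨f, hf, hFf⟩ := F.2
  obtain ⟨a, ha⟩ := hf.exists_hasTaylorCoeffsAt
  obtain ⟨q, r, c, hq, hr, hc, hdiv⟩ := exists_division B G A (fun β h => (hGA β h).2.1)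
    (fun β h => (hGA β h).2.2.1) (fun β h => (hGA β h).2.2.2) ha
  let Q : B → HoloGerms n := fun β => ⟨(q β : GermAt0 n), q β, hq β β.2, rfl⟩
  let S : HoloGerms n := ∑ β : B, Q β * g (i β β)
  have hS : S ∈ Ideal.span (Set.range g) :=
    Ideal.sum_mem _ fun β _ => Ideal.mul_mem_left _ _ (Ideal.subset_span ⟨_, rfl⟩)
  have hSgerm : (S : GermAt0 n) = ((∑ β ∈ B, q β * G β : (Fin n → ℂ) → ℂ) : GermAt0 n) := by
    have h1 : ((∑ β ∈ B, q β * G β : (Fin n → ℂ) → ℂ) : GermAt0 n) =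
        ∑ β ∈ B, ((q β * G β : (Fin n → ℂ) → ℂ) : GermAt0 n) :=
      map_sum (Germ.coeRingHom (R := ℂ) (𝓝 (0 : Fin n → ℂ))) _ _
    rw [h1, ← Finset.sum_coe_sort B]
    simp only [S, AddSubmonoidClass.coe_finsetSum]
    refine Finset.sum_congr rfl fun β _ => ?_
    rw [Subring.coe_mul, (hGA β β.2).1]
    rfl
  have hR : ((F - S : HoloGerms n) : GermAt0 n) = (r : GermAt0 n) := by
    rw [AddSubgroupClass.coe_sub, hFf, hSgerm, sub_eq_iff_eq_add, ← Germ.coe_add, Germ.coe_eq]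
    filter_upwards [hdiv] with z hz
    rw [hz, Pi.add_apply, Finset.sum_apply, add_comm]
    rfl
  have hc0 : ∀ α, c α = 0 := by
    by_contra! hne
    obtain ⟨α, hα, hmin⟩ := exists_monLE_min {α | c α ≠ 0} hne
    obtain ⟨j, β, hβ, hle⟩ := (hIM α).1
      ⟨F - S, I.sub_mem hF (hspan hS), α, ⟨r, c, hR, hr, hα, hmin⟩, le_rfl⟩
    obtain ⟨β', hβ', hle'⟩ := hB β ⟨j, hβ⟩
    exact hc α hα β' hβ' (hle'.trans hle)
  have hR0 : F - S = 0 := by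
    apply Subtype.ext
    rw [hR]
    obtain ⟨U, hU, h⟩ := hr
    refine Germ.coe_eq.2 ?_
    filter_upwards [hU] with z hz
    rw [(h z hz).2]
    simp [hc0]
  rw [sub_eq_zero.1 hR0]
  exact hS
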